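/- There are absolute constants c₁ > 0 and c₂ > 0 with the following property. Let n ≥ 2, let A be an n×n real positive semidefinite matrix and N an n×n real matrix such that ‖N‖_F² ≤ η ‖A‖_F² for some 0 < η ≤ 1 and ‖N_{·,j}‖₂² ≤ ‖A_{·,j}‖₂² for every j; assume (A+N)_{jj} > 0 for all j, and set q_j = (A+N)_{jj}/tr(A+N) and φ = max_j A_{jj}/(A+N)_{jj}. Let t ≥ 1 be an integer, sample indices j₁,…,j_t independently with ℙ(j_l = j) = q_j, and let AT be the n×t matrix with l-th column A_{·,j_l}/√(t·q_{j_l}). Then for every fixed row index i ∈ {1,…,n}, with probability at least 1 − n^{−c₂}: ‖(AT)_{i,·}‖₂² ≤ c₁ · log(n) · max{ ‖A_{i,·}‖₂² , φ·√n·‖A‖_F·A_{ii}/t }. -/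

import Mathlib

open Matrix

noncomputable def frobeniusSq {m n : ℕ} (M : Matrix (Fin m) (Fin n) ℝ) : ℝ :=
  ∑ i, ∑ j, (M i j)^2

/-- The n×t column-sampling-and-rescaling matrix: its l-th column is
(1/√(t·q(jv l))) times the standard basis vector e_{jv l}. -/
noncomputable def colSample {n : ℕ} (t : ℕ) (q : Fin n → ℝ) (jv : Fin t → Fin n) :
    Matrix (Fin n) (Fin t) ℝ :=
  Matrix.of fun i l => if i = jv l then (Real.sqrt (t * q (jv l)))⁻¹ else 0

/-- Probability, under i.i.d. sampling of t indices with distribution q, of the event E. -/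
noncomputable def iidProb {n : ℕ} (t : ℕ) (q : Fin n → ℝ) (E : Set (Fin t → Fin n)) : ℝ :=
  ∑ jv : Fin t → Fin n, Set.indicator E (fun v => ∏ l, q (v l)) jv

/-- Probability, under two independent i.i.d. samples of t indices each (with
distributions q and p respectively), of the event E. -/
noncomputable def iidProb2 {n : ℕ} (t : ℕ) (q p : Fin n → ℝ)
    (E : Set ((Fin t → Fin n) × (Fin t → Fin n))) : ℝ :=
  ∑ w : (Fin t → Fin n) × (Fin t → Fin n),
    Set.indicator E (fun w => (∏ l, q (w.1 l)) * (∏ l, p (w.2 l))) w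

/-!
The squared norm of row `i` of the sketch is a sum of `t` i.i.d. nonnegative terms
`(A i j) ^ 2 / (t * q j)` with total mean exactly `‖A_{i,·}‖²`. Positive semidefiniteness gives
`(A i j) ^ 2 ≤ A i i * A j j`, and since `q j` is proportional to `(A + N) j j`, the ratio
`A j j / q j` is at most `φ * tr (A + N)`; by Cauchy–Schwarz the trace is at most `2 √n ‖A‖_F`.
So every term is at most twice the second entry of the maximum, and a Chernoff bound at the scale
of this maximum leaves an exponentially small probability of exceeding it by a factor `c₁ log n`.
-/

lemma exp_le_one_add_two_mul {y : ℝ} (hy₀ : 0 ≤ y) (hy₁ : y ≤ 1) : Real.exp y ≤ 1 + 2 * y := by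
  have h := (abs_le.mp (Real.abs_exp_sub_one_le (abs_le.mpr ⟨by linarith, hy₁⟩))).2
  rw [abs_of_nonneg hy₀] at h
  linarith

lemma sum_mul_exp_inv_mul_le_exp {ι : Type*} [Fintype ι] {q x : ι → ℝ} {B : ℝ} (hq : ∀ j, 0 ≤ q j)
    (hq_sum : ∑ j, q j = 1) (hB : 0 < B) (hx₀ : ∀ j, 0 ≤ x j) (hxB : ∀ j, x j ≤ B) :
    ∑ j, q j * Real.exp (B⁻¹ * x j) ≤ Real.exp (B⁻¹ * (2 * ∑ j, q j * x j)) := by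
  have h_exp (j : ι) : Real.exp (B⁻¹ * x j) ≤ 1 + 2 * (B⁻¹ * x j) :=
    exp_le_one_add_two_mul (mul_nonneg (inv_nonneg.mpr hB.le) (hx₀ j))
      ((inv_mul_le_one₀ hB).mpr (hxB j))
  calc ∑ j, q j * Real.exp (B⁻¹ * x j)
      ≤ ∑ j, q j * (1 + 2 * (B⁻¹ * x j)) :=
        Finset.sum_le_sum fun j _ => mul_le_mul_of_nonneg_left (h_exp j) (hq j)
    _ = B⁻¹ * (2 * ∑ j, q j * x j) + 1 := by
        simp only [mul_add, mul_one, Finset.sum_add_distrib, hq_sum, Finset.mul_sum, add_comm]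
        exact congrArg _ (Finset.sum_congr rfl fun j _ => by ring)
    _ ≤ Real.exp (B⁻¹ * (2 * ∑ j, q j * x j)) := Real.add_one_le_exp _

section IidProb

variable {n t : ℕ} {q x : Fin n → ℝ}

lemma iidProb_univ (t : ℕ) (q : Fin n → ℝ) : iidProb t q Set.univ = (∑ j, q j) ^ t := by
  rw [iidProb, Set.indicator_univ, Fintype.sum_pow]

lemma iidProb_compl (hq_sum : ∑ j, q j = 1) (E : Set (Fin t → Fin n)) :
    iidProb t q Eᶜ = 1 - iidProb t q E := by
  have h_total : iidProb t q Eᶜ + iidProb t q E = iidProb t q Set.univ := by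
    simp only [iidProb, ← Finset.sum_add_distrib, Set.indicator_compl_add_self_apply,
      Set.indicator_univ]
  rw [iidProb_univ, hq_sum, one_pow] at h_total
  exact eq_sub_of_add_eq h_total

lemma iidProb_lt_sum_le_exp_mul_pow (hq : ∀ j, 0 ≤ q j) {θ : ℝ} (hθ : 0 ≤ θ) (s : ℝ) :
    iidProb t q {v | s < ∑ l, x (v l)} ≤
      Real.exp (-(θ * s)) * (∑ j, q j * Real.exp (θ * x j)) ^ t := by
  rw [Fintype.sum_pow, Finset.mul_sum, iidProb]
  refine Finset.sum_le_sum fun v _ => Set.indicator_apply_le' (fun hv => ?_) (fun _ => ?_)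
  · have h_weight : 1 ≤ Real.exp (-(θ * s)) * Real.exp (θ * ∑ l, x (v l)) := by
      rw [← Real.exp_add, Real.one_le_exp_iff, neg_add_eq_sub, sub_nonneg]
      exact mul_le_mul_of_nonneg_left (Set.mem_ofPred.mp hv).le hθ
    calc ∏ l, q (v l)
        ≤ (∏ l, q (v l)) * (Real.exp (-(θ * s)) * Real.exp (θ * ∑ l, x (v l))) :=
          le_mul_of_one_le_right (Finset.prod_nonneg fun l _ => hq _) h_weight
      _ = Real.exp (-(θ * s)) * ∏ l, q (v l) * Real.exp (θ * x (v l)) := by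
          rw [Finset.prod_mul_distrib, ← Real.exp_sum, Finset.mul_sum]
          ring
  · exact mul_nonneg (Real.exp_pos _).le
      (Finset.prod_nonneg fun l _ => mul_nonneg (hq _) (Real.exp_pos _).le)

lemma iidProb_lt_sum_le_exp {B : ℝ} (hq : ∀ j, 0 ≤ q j) (hq_sum : ∑ j, q j = 1) (hB : 0 < B)
    (hx₀ : ∀ j, 0 ≤ x j) (hxB : ∀ j, x j ≤ B) (s : ℝ) :
    iidProb t q {v | s < ∑ l, x (v l)} ≤
      Real.exp ((2 * (t * ∑ j, q j * x j) - s) / B) := by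
  calc iidProb t q {v | s < ∑ l, x (v l)}
      ≤ Real.exp (-(B⁻¹ * s)) * (∑ j, q j * Real.exp (B⁻¹ * x j)) ^ t :=
        iidProb_lt_sum_le_exp_mul_pow hq (inv_nonneg.mpr hB.le) s
    _ ≤ Real.exp (-(B⁻¹ * s)) * Real.exp (B⁻¹ * (2 * ∑ j, q j * x j)) ^ t := by
        gcongr
        · exact Finset.sum_nonneg fun j _ => mul_nonneg (hq j) (Real.exp_pos _).le
        · exact sum_mul_exp_inv_mul_le_exp hq hq_sum hB hx₀ hxB
    _ = Real.exp ((2 * (t * ∑ j, q j * x j) - s) / B) := by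
        rw [← Real.exp_nat_mul, ← Real.exp_add]
        ring_nf

lemma one_sub_exp_le_iidProb_sum_le_mul {κ M : ℝ} (hq : ∀ j, 0 ≤ q j) (hq_sum : ∑ j, q j = 1)
    (hκ : 0 < κ) (hx₀ : ∀ j, 0 ≤ x j) (hxM : ∀ j, x j ≤ κ * M)
    (h_mean : t * ∑ j, q j * x j ≤ M) (L : ℝ) :
    1 - Real.exp ((2 - L) / κ) ≤ iidProb t q {v | ∑ l, x (v l) ≤ L * M} := by
  have h_compl : {v : Fin t → Fin n | ∑ l, x (v l) ≤ L * M}ᶜ = {v | L * M < ∑ l, x (v l)} := by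
    simp only [Set.compl_ofPred, not_le]
  suffices h_tail : iidProb t q {v | L * M < ∑ l, x (v l)} ≤ Real.exp ((2 - L) / κ) by
    rw [← h_compl, iidProb_compl hq_sum] at h_tail
    linarith
  have hM : 0 ≤ M :=
    (mul_nonneg t.cast_nonneg (Finset.sum_nonneg fun j _ => mul_nonneg (hq j) (hx₀ j))).trans h_mean
  rcases hM.eq_or_lt with rfl | hM_pos
  · have hx (j : Fin n) : x j = 0 := le_antisymm (by simpa using hxM j) (hx₀ j)
    simpa [hx, iidProb] using (Real.exp_pos _).le
  · calc iidProb t q {v | L * M < ∑ l, x (v l)}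
        ≤ Real.exp ((2 * (t * ∑ j, q j * x j) - L * M) / (κ * M)) :=
          iidProb_lt_sum_le_exp hq hq_sum (mul_pos hκ hM_pos) hx₀ hxM _
      _ ≤ Real.exp ((2 * M - L * M) / (κ * M)) := by gcongr
      _ = Real.exp ((2 - L) / κ) := by rw [← sub_mul, mul_div_mul_right _ _ hM_pos.ne']

end IidProb

lemma frobeniusSq_nonneg {m n : ℕ} (M : Matrix (Fin m) (Fin n) ℝ) : 0 ≤ frobeniusSq M := by
  unfold frobeniusSq
  positivity

lemma trace_le_sqrt_mul_sqrt_frobeniusSq {n : ℕ} (B : Matrix (Fin n) (Fin n) ℝ) :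
    B.trace ≤ √n * √(frobeniusSq B) := by
  have h_diag : ∑ i, B i i ^ 2 ≤ frobeniusSq B :=
    Finset.sum_le_sum fun i _ =>
      Finset.single_le_sum (fun j _ => sq_nonneg (B i j)) (Finset.mem_univ i)
  rw [← Real.sqrt_mul n.cast_nonneg]
  apply Real.le_sqrt_of_sq_le
  calc B.trace ^ 2 ≤ n * ∑ i, B i i ^ 2 := by
        simpa [Matrix.trace] using sq_sum_le_card_mul_sum_sq (s := Finset.univ) (f := B.diag)
    _ ≤ n * frobeniusSq B := by gcongr

lemma trace_add_le_of_frobeniusSq_le {n : ℕ} {A N : Matrix (Fin n) (Fin n) ℝ}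
    (hN : frobeniusSq N ≤ frobeniusSq A) :
    (A + N).trace ≤ 2 * (√n * √(frobeniusSq A)) := by
  calc (A + N).trace = A.trace + N.trace := Matrix.trace_add A N
    _ ≤ √n * √(frobeniusSq A) + √n * √(frobeniusSq N) :=
        add_le_add (trace_le_sqrt_mul_sqrt_frobeniusSq A) (trace_le_sqrt_mul_sqrt_frobeniusSq N)
    _ ≤ √n * √(frobeniusSq A) + √n * √(frobeniusSq A) := by gcongr
    _ = 2 * (√n * √(frobeniusSq A)) := (two_mul _).symm

open scoped ComplexOrder in
lemma apply_mul_apply_le_of_posSemidef {ι 𝕜 : Type*} [RCLike 𝕜] {A : Matrix ι ι 𝕜}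
    (hA : A.PosSemidef) (i j : ι) :
    A i j * A j i ≤ A i i * A j j := by
  have h_minor := (hA.submatrix ![i, j]).det_nonneg
  rw [Matrix.det_fin_two] at h_minor
  exact sub_nonneg.mp h_minor

lemma sq_apply_le_of_posSemidef {ι : Type*} {A : Matrix ι ι ℝ} (hA : A.PosSemidef) (i j : ι) :
    A i j ^ 2 ≤ A i i * A j j := by
  have h_symm : A j i = A i j := hA.isHermitian.apply i j
  simpa only [h_symm, ← sq] using apply_mul_apply_le_of_posSemidef hA i j

lemma sq_mul_colSample_apply {ι : Type*} {n t : ℕ} {q : Fin n → ℝ} (hq : ∀ j, 0 ≤ q j)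
    (A : Matrix ι (Fin n) ℝ) (v : Fin t → Fin n) (i : ι) (l : Fin t) :
    (A * colSample t q v) i l ^ 2 = A i (v l) ^ 2 / (t * q (v l)) := by
  have h_entry : (A * colSample t q v) i l = A i (v l) / √(t * q (v l)) := by
    simp [Matrix.mul_apply, colSample, div_eq_mul_inv]
  rw [h_entry, div_pow, Real.sq_sqrt (mul_nonneg t.cast_nonneg (hq _))]

lemma mul_sum_mul_div_eq_sum {ι K : Type*} [Fintype ι] [Field K] {q : ι → K} {t : K}
    (ht : t ≠ 0) (hq : ∀ j, q j ≠ 0) (f : ι → K) :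
    t * ∑ j, q j * (f j / (t * q j)) = ∑ j, f j := by
  rw [Finset.mul_sum]
  refine Finset.sum_congr rfl fun j _ => ?_
  rw [← mul_assoc, mul_div_cancel₀ _ (mul_ne_zero ht (hq j))]

lemma sq_apply_div_le_of_posSemidef {ι : Type*} {A : Matrix ι ι ℝ} {d : ι → ℝ} {φ S t : ℝ}
    (hA : A.PosSemidef) (hd : ∀ j, 0 < d j) (hφ : ∀ j, A j j / d j ≤ φ) (hS : 0 ≤ S)
    (ht : 0 ≤ t) (i j : ι) :
    A i j ^ 2 / (t * (d j / S)) ≤ φ * S * A i i / t := by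
  have h_diag : 0 ≤ A i i := hA.diag_nonneg
  have h_den : 0 ≤ t * (d j / S) := mul_nonneg ht (div_nonneg (hd j).le hS)
  calc A i j ^ 2 / (t * (d j / S))
      ≤ A i i * A j j / (t * (d j / S)) :=
        div_le_div_of_nonneg_right (sq_apply_le_of_posSemidef hA i j) h_den
    _ = A j j / d j * S * A i i / t := by
        simp only [div_eq_mul_inv, mul_inv, inv_inv]
        ring
    _ ≤ φ * S * A i i / t := by
        gcongr
        exact hφ j

-- The constant `3` comes from `2 / log 2 < 3`.
lemma exp_sub_mul_log_div_le_rpow_neg {n : ℕ} {κ : ℝ} (hn : 2 ≤ n) (hκ : 0 < κ) (c : ℝ) :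
    Real.exp ((2 - (κ * c + 3) * Real.log n) / κ) ≤ (n : ℝ) ^ (-c) := by
  have h_log : Real.log 2 ≤ Real.log n := Real.log_le_log two_pos (by exact_mod_cast hn)
  have h_log_two := Real.log_two_gt_d9
  rw [Real.rpow_def_of_pos (by positivity), Real.exp_le_exp, div_le_iff₀ hκ]
  linarith

/-- `d` stands for the diagonal of `A + N`, through which alone the noise enters the sampling. -/
theorem row_norm_bound_of_column_sample_general {n t : ℕ} {A : Matrix (Fin n) (Fin n) ℝ}
    {d : Fin n → ℝ} {κ φ : ℝ} (hn : 2 ≤ n) (hA : A.PosSemidef) (hd : ∀ j, 0 < d j)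
    (hd_sum : ∑ j, d j ≤ κ * (√n * √(frobeniusSq A))) (hφ : ∀ j, A j j / d j ≤ φ)
    (ht : 1 ≤ t) (c : ℝ) (i : Fin n) :
    1 - (n : ℝ) ^ (-c) ≤
      iidProb t (fun j => d j / ∑ k, d k)
        {v | ∑ l, (A * colSample t (fun j => d j / ∑ k, d k) v) i l ^ 2 ≤
          (κ * c + 3) * Real.log n *
            max (∑ j, A i j ^ 2) (φ * √n * √(frobeniusSq A) * A i i / t)} := by
  have ht_pos : (0 : ℝ) < t := by exact_mod_cast ht
  have hS : 0 < ∑ k, d k := Finset.sum_pos (fun j _ => hd j) ⟨i, Finset.mem_univ i⟩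
  have hκ : 0 < κ := pos_of_mul_pos_left (hS.trans_le hd_sum) (by positivity)
  have h_diag : 0 ≤ A i i := hA.diag_nonneg
  have hφ_nonneg : 0 ≤ φ := (div_nonneg h_diag (hd i).le).trans (hφ i)
  have hq (j : Fin n) : 0 < d j / ∑ k, d k := div_pos (hd j) hS
  have hq_sum : ∑ j, d j / ∑ k, d k = 1 := by rw [← Finset.sum_div, div_self hS.ne']
  have h_term (j : Fin n) : A i j ^ 2 / (t * (d j / ∑ k, d k)) ≤
      κ * max (∑ j, A i j ^ 2) (φ * √n * √(frobeniusSq A) * A i i / t) := by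
    calc A i j ^ 2 / (t * (d j / ∑ k, d k))
        ≤ φ * (∑ k, d k) * A i i / t :=
          sq_apply_div_le_of_posSemidef hA hd hφ hS.le ht_pos.le i j
      _ ≤ φ * (κ * (√n * √(frobeniusSq A))) * A i i / t := by gcongr
      _ = κ * (φ * √n * √(frobeniusSq A) * A i i / t) := by ring
      _ ≤ κ * max (∑ j, A i j ^ 2) (φ * √n * √(frobeniusSq A) * A i i / t) := by
          gcongr
          exact le_max_right _ _
  have h_mean : t * ∑ j, d j / (∑ k, d k) * (A i j ^ 2 / (t * (d j / ∑ k, d k))) =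
      ∑ j, A i j ^ 2 :=
    mul_sum_mul_div_eq_sum ht_pos.ne' (fun j => (hq j).ne') _
  simp only [sq_mul_colSample_apply fun j => (hq j).le]
  refine (sub_le_sub_left (exp_sub_mul_log_div_le_rpow_neg hn hκ c) 1).trans ?_
  exact one_sub_exp_le_iidProb_sum_le_mul (x := fun j => A i j ^ 2 / (t * (d j / ∑ k, d k)))
    (fun j => (hq j).le) hq_sum hκ
    (fun j => div_nonneg (sq_nonneg _) (mul_pos ht_pos (hq j)).le) h_term
    (h_mean.le.trans (le_max_left _ _)) _

/-- Row norms of the diagonal-sampled column sketch: for each fixed row i, with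
probability at least 1 − n^{−c₂}, the squared norm of the i-th row of AT is at most
c₁ log(n) · max(‖A_{i,·}‖₂², φ√n‖A‖_F·A_{ii}/t). -/
theorem row_norm_bound_of_column_sample :
    ∃ c₁ c₂ : ℝ, 0 < c₁ ∧ 0 < c₂ ∧
      ∀ (n : ℕ) (A N : Matrix (Fin n) (Fin n) ℝ) (η φ : ℝ) (t : ℕ),
        2 ≤ n →
        A.PosSemidef →
        0 < η → η ≤ 1 →
        frobeniusSq N ≤ η * frobeniusSq A →
        (∀ j, (∑ i, (N i j)^2) ≤ ∑ i, (A i j)^2) →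
        (∀ j, 0 < (A + N) j j) →
        IsGreatest (Set.range fun j => A j j / (A + N) j j) φ →
        1 ≤ t →
        ∀ i : Fin n,
          1 - (n : ℝ) ^ (-c₂) ≤
            iidProb t (fun j => (A + N) j j / (A + N).trace)
              {v : Fin t → Fin n |
                ∑ l, ((A * colSample t (fun j => (A + N) j j / (A + N).trace) v) i l)^2 ≤
                  c₁ * Real.log n *
                    max (∑ j, (A i j)^2)
                      (φ * Real.sqrt n * Real.sqrt (frobeniusSq A) * A i i / t)} := by
  refine ⟨2 * 1 + 3, 1, by norm_num, one_pos, fun n A N η φ t hn hA _ hη hN _ hd hφ ht i => ?_⟩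
  have hNA := hN.trans (mul_le_of_le_one_left (frobeniusSq_nonneg A) hη)
  exact row_norm_bound_of_column_sample_general hn hA hd (trace_add_le_of_frobeniusSq_le hNA)
    (fun j => hφ.2 ⟨j, rfl⟩) ht 1 i
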